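/- Let n ≥ 2, let ℓ_{i+1}, …, ℓ_n be positive real numbers for some fixed integer i with 1 ≤ i ≤ n−1, let P_i = ∑_{j=i+1}^n ℓ_j, E(R_i) be the persistent entropy of (ℓ_{i+1}, …, ℓ_n), and ℓ' = P_i / exp(E(R_i)). Then for every choice of positive real numbers x_1, …, x_i, the persistent entropy of (x_1, …, x_i, ℓ_{i+1}, …, ℓ_n) is at most the persistent entropy of the sequence consisting of i copies of ℓ' followed by ℓ_{i+1}, …, ℓ_n; that is, ℓ' maximizes the entropy over all possible values of the first i lengths with the last n−i lengths held fixed. -/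

import Mathlib

/-!
Let `z` be the sequence whose first `i` entries equal `ℓ' = P / exp (E (R))` and whose tail is `ℓ`,
and let `Z` be its sum. Since `P * log ℓ' = P * log P - P * E(R) = ∑ ℓ_j log ℓ_j` over the tail,
every positive `y` with tail `ℓ` satisfies `∑ y_j log z_j = (∑ y_j) log ℓ'`. Thus the cross entropy
of `y` relative to `z` is the constant `log Z - log ℓ'`, whatever the first `i` entries of `y` are.
Gibbs' inequality bounds `E(y)` by this cross entropy, and for `y = z` the cross entropy is `E(z)`.
-/

open Finset

/-- Persistent entropy of the lengths `ℓ i` for `i` ranging over the finite index set `s`: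
`E = -∑ i (ℓ i / S) log (ℓ i / S)` where `S = ∑ i ℓ i`. -/
noncomputable def pentropy {ι : Type*} (s : Finset ι) (ℓ : ι → ℝ) : ℝ :=
  -∑ i ∈ s, (ℓ i / ∑ j ∈ s, ℓ j) * Real.log (ℓ i / ∑ j ∈ s, ℓ j)

/-- Indices `j` with `i ≤ j` (the "tail" `R_i` of a barcode, 0-indexed). -/
def tailSet (n i : ℕ) : Finset (Fin n) := Finset.univ.filter (fun j => i ≤ (j : ℕ))

lemma pentropy_eq {ι : Type*} (s : Finset ι) (hs : s.Nonempty) (y : ι → ℝ)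
    (hy : ∀ j ∈ s, 0 < y j) :
    pentropy s y = Real.log (∑ j ∈ s, y j) - (∑ j ∈ s, y j * Real.log (y j)) / ∑ j ∈ s, y j := by
  have hS : 0 < ∑ j ∈ s, y j := Finset.sum_pos hy hs
  unfold pentropy
  have h : ∀ j ∈ s, (y j / ∑ k ∈ s, y k) * Real.log (y j / ∑ k ∈ s, y k) =
      (y j * Real.log (y j) - y j * Real.log (∑ k ∈ s, y k)) / ∑ k ∈ s, y k := by
    intro j hj
    rw [Real.log_div (hy j hj).ne' hS.ne']
    ring
  rw [Finset.sum_congr rfl h, ← Finset.sum_div, Finset.sum_sub_distrib, ← Finset.sum_mul]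
  field_simp
  ring

/-- Gibbs' inequality for unnormalized weights: the entropy of `y` is at most its cross entropy
relative to `z`. -/
lemma pentropy_le_cross {ι : Type*} (s : Finset ι) (hs : s.Nonempty) (y z : ι → ℝ)
    (hy : ∀ j ∈ s, 0 < y j) (hz : ∀ j ∈ s, 0 < z j) :
    pentropy s y ≤
      Real.log (∑ j ∈ s, z j) - (∑ j ∈ s, y j * Real.log (z j)) / ∑ j ∈ s, y j := by
  rw [pentropy_eq s hs y hy]
  have hS : 0 < ∑ j ∈ s, y j := Finset.sum_pos hy hs
  have hZ : 0 < ∑ j ∈ s, z j := Finset.sum_pos hz hs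
  set S := ∑ j ∈ s, y j with hSdef
  set Z := ∑ j ∈ s, z j with hZdef
  -- `log t ≤ t - 1` at the likelihood ratio `t = (z j / Z) / (y j / S)`
  have h : ∀ j ∈ s, y j * Real.log (z j) - y j * Real.log (y j) + y j * (Real.log S - Real.log Z)
      ≤ z j * (S / Z) - y j := by
    intro j hj
    have hyj := hy j hj
    have hzj := hz j hj
    have h1 := Real.log_le_sub_one_of_pos (x := (z j * S) / (y j * Z)) (by positivity)
    rw [Real.log_div (by positivity) (by positivity), Real.log_mul hzj.ne' hS.ne',
      Real.log_mul hyj.ne' hZ.ne'] at h1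
    have h2 := mul_le_mul_of_nonneg_left h1 hyj.le
    have h3 : y j * ((z j * S) / (y j * Z) - 1) = z j * (S / Z) - y j := by
      field_simp
    linarith
  have h4 := Finset.sum_le_sum h
  rw [Finset.sum_add_distrib, Finset.sum_sub_distrib, Finset.sum_sub_distrib, ← Finset.sum_mul,
    ← Finset.sum_mul, ← hSdef, ← hZdef, mul_div_cancel₀ _ hZ.ne', sub_self] at h4
  have h5 : (∑ j ∈ s, y j * Real.log (z j)) / S - (∑ j ∈ s, y j * Real.log (y j)) / S
      + (Real.log S - Real.log Z) ≤ 0 := by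
    have := div_le_div_of_nonneg_right h4 hS.le
    rw [zero_div, add_div, sub_div, mul_div_cancel_left₀ _ hS.ne'] at this
    exact this
  linarith

/-- with the last `n - i` lengths held fixed, the choice of the first `i`
lengths that maximizes the persistent entropy is `i` copies of `P_i / exp (E (R_i))`. -/
theorem neutralized_is_max {n : ℕ} (hn : 2 ≤ n) (i : ℕ) (hi1 : 1 ≤ i) (hi2 : i ≤ n - 1)
    (ℓ : Fin n → ℝ) (hpos : ∀ j : Fin n, i ≤ (j : ℕ) → 0 < ℓ j)
    (x : Fin n → ℝ) (hx : ∀ j : Fin n, (j : ℕ) < i → 0 < x j) :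
    pentropy Finset.univ (fun j : Fin n => if (j : ℕ) < i then x j else ℓ j) ≤
      pentropy Finset.univ (fun j : Fin n =>
        if (j : ℕ) < i then
          (∑ k ∈ tailSet n i, ℓ k) / Real.exp (pentropy (tailSet n i) ℓ)
        else ℓ j) := by
  have hne : (tailSet n i).Nonempty := ⟨⟨n - 1, by omega⟩, by simp [tailSet]; omega⟩
  have hu : (Finset.univ : Finset (Fin n)).Nonempty := ⟨⟨0, by omega⟩, Finset.mem_univ _⟩
  have htail : ∀ j ∈ tailSet n i, 0 < ℓ j := fun j hj => hpos j (by simpa [tailSet] using hj)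
  have hP : 0 < ∑ k ∈ tailSet n i, ℓ k := Finset.sum_pos htail hne
  have hE := pentropy_eq _ hne ℓ htail
  set a := (∑ k ∈ tailSet n i, ℓ k) / Real.exp (pentropy (tailSet n i) ℓ) with ha
  have hapos : 0 < a := by positivity
  have hlog : ∑ k ∈ tailSet n i, ℓ k * (Real.log (ℓ k) - Real.log a) = 0 := by
    rw [ha, Real.log_div hP.ne' (Real.exp_pos _).ne', Real.log_exp, hE]
    simp only [mul_sub, Finset.sum_sub_distrib, ← Finset.sum_mul]
    field_simp
    ring
  have hpos' : ∀ w : Fin n → ℝ, (∀ j : Fin n, (j : ℕ) < i → 0 < w j) →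
      ∀ j ∈ (Finset.univ : Finset (Fin n)), 0 < (if (j : ℕ) < i then w j else ℓ j) := by
    intro w hw j _
    split_ifs with h
    · exact hw j h
    · exact hpos j (by omega)
  -- the cross entropy relative to the neutralized sequence does not depend on the head `w`
  have hcross : ∀ w : Fin n → ℝ, (∀ j : Fin n, (j : ℕ) < i → 0 < w j) →
      (∑ j : Fin n, (if (j : ℕ) < i then w j else ℓ j) *
        Real.log (if (j : ℕ) < i then a else ℓ j)) /
        (∑ j : Fin n, if (j : ℕ) < i then w j else ℓ j) = Real.log a := by
    intro w hw
    rw [div_eq_iff (Finset.sum_pos (hpos' w hw) hu).ne', Finset.mul_sum, ← sub_eq_zero,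
      ← Finset.sum_sub_distrib, ← hlog, tailSet, Finset.sum_filter]
    refine Finset.sum_congr rfl fun j _ => ?_
    by_cases h : (j : ℕ) < i
    · simp only [h, if_true, if_neg (not_le.mpr h)]
      ring
    · simp only [h, if_false, if_pos (not_lt.mp h)]
      ring
  have hA : ∀ j : Fin n, (j : ℕ) < i → 0 < (fun _ : Fin n => a) j := fun _ _ => hapos
  refine (pentropy_le_cross _ hu _ _ (hpos' x hx) (hpos' _ hA)).trans_eq ?_
  rw [pentropy_eq _ hu _ (hpos' _ hA), hcross x hx, hcross _ hA]
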